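/- Let p, q, r, a, b, c, d ∈ ℂ and let z₁, …, z₅ be the roots with multiplicity of X⁵ + pX² + qX + r over ℂ. Then the coefficient of Y⁴ in T(Y) = ∏ᵢ₌₁⁵ (Y + zᵢ⁴ + d·zᵢ³ + c·zᵢ² + b·zᵢ + a) equals 5a − 3pd − 4q. In particular, the choice a = (3pd + 4q)/5 makes the coefficient of Y⁴ vanish. -/

import Mathlib

/-!
The second coefficient of a Tschirnhaus transform is the sum of the values of the subsidiary
polynomial at the roots, hence a linear combination of the power sums `P₀, …, P₄` of the roots. When
the two coefficients after the leading one vanish, Newton's identities collapse: `P₁ = P₂ = 0`,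
while `P₃` and `P₄` are `-3` and `-4` times the next two coefficients.
-/

open Polynomial

/-- The Tschirnhaus transform `T(Y) = ∏ᵢ (Y + zᵢ⁴ + d·zᵢ³ + c·zᵢ² + b·zᵢ + a)`
of a quintic with roots `z₁, …, z₅`, given by the quartic subsidiary
equation `z⁴ + dz³ + cz² + bz + a + y = 0`. -/
noncomputable def bringQuinticTransform (a b c d z₁ z₂ z₃ z₄ z₅ : ℂ) :
    Polynomial ℂ :=
  (X + C (z₁ ^ 4 + d * z₁ ^ 3 + c * z₁ ^ 2 + b * z₁ + a)) *
  (X + C (z₂ ^ 4 + d * z₂ ^ 3 + c * z₂ ^ 2 + b * z₂ + a)) *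
  (X + C (z₃ ^ 4 + d * z₃ ^ 3 + c * z₃ ^ 2 + b * z₃ + a)) *
  (X + C (z₄ ^ 4 + d * z₄ ^ 3 + c * z₄ ^ 2 + b * z₄ + a)) *
  (X + C (z₅ ^ 4 + d * z₅ ^ 3 + c * z₅ ^ 2 + b * z₅ + a))

section Newton

open Finset.HasAntidiagonal (antidiagonal)

variable {R : Type*} [CommRing R]

theorem multiset_sum_map_pow_eq_mul_esymm_sub_sum (s : Multiset R) {k : ℕ} (hk : 0 < k) :
    (s.map (· ^ k)).sum = (-1) ^ (k + 1) * k * s.esymm k -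
      ∑ i ∈ antidiagonal k with i.1 ∈ Set.Ioo 0 k,
        (-1) ^ i.1 * s.esymm i.1 * (s.map (· ^ i.2)).sum := by
  classical
  have aeval_esymm (j : ℕ) :
      MvPolynomial.aeval (fun x : s ↦ x.1) (MvPolynomial.esymm s R j) = s.esymm j := by
    rw [MvPolynomial.aeval_esymm_eq_multiset_esymm, s.map_univ_coe]
  have aeval_psum (j : ℕ) :
      MvPolynomial.aeval (fun x : s ↦ x.1) (MvPolynomial.psum s R j) = (s.map (· ^ j)).sum := by
    simp only [MvPolynomial.psum, map_sum, map_pow, MvPolynomial.aeval_X]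
    exact congrArg Multiset.sum (s.map_univ (· ^ j))
  simpa only [map_sub, map_sum, map_mul, map_pow, map_neg, map_one, map_natCast, aeval_esymm,
    aeval_psum] using congrArg (MvPolynomial.aeval (fun x : s ↦ x.1))
      (MvPolynomial.psum_eq_mul_esymm_sub_sum s R k hk)

variable [IsDomain R]

/-- The sum of the `k`-th powers of the roots of `f` in `R`, counted with multiplicity. -/
noncomputable def rootPowerSum (f : R[X]) (k : ℕ) : R :=
  (f.roots.map (· ^ k)).sum

variable {f : R[X]}

theorem coeff_natDegree_sub_eq_esymm_roots (hf : f.Monic) (hsplits : f.Splits) {k : ℕ}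
    (hk : k ≤ f.natDegree) : f.coeff (f.natDegree - k) = (-1) ^ k * f.roots.esymm k := by
  rw [coeff_eq_esymm_roots_of_card hsplits.natDegree_eq_card_roots.symm (Nat.sub_le _ _),
    hf.leadingCoeff, one_mul, Nat.sub_sub_self hk]

theorem rootPowerSum_eq_neg_mul_coeff_sub_sum (hf : f.Monic) (hsplits : f.Splits) {k : ℕ}
    (hk : 0 < k) (hkf : k ≤ f.natDegree) :
    rootPowerSum f k = -(k * f.coeff (f.natDegree - k)) -
      ∑ i ∈ antidiagonal k with i.1 ∈ Set.Ioo 0 k,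
        f.coeff (f.natDegree - i.1) * rootPowerSum f i.2 := by
  rw [rootPowerSum, multiset_sum_map_pow_eq_mul_esymm_sub_sum _ hk,
    coeff_natDegree_sub_eq_esymm_roots hf hsplits hkf]
  congr 1
  · ring
  · refine Finset.sum_congr rfl fun i hi ↦ ?_
    have hik : i.1 ≤ k := (Finset.mem_filter.mp hi).2.2.le
    rw [coeff_natDegree_sub_eq_esymm_roots hf hsplits (hik.trans hkf), rootPowerSum]

end Newton

section SmallPowerSums

variable {R : Type*} [CommRing R] [IsDomain R] {f : R[X]}

theorem rootPowerSum_one (hf : f.Monic) (hsplits : f.Splits) (hdeg : 1 ≤ f.natDegree) :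
    rootPowerSum f 1 = -f.coeff (f.natDegree - 1) := by
  simp [rootPowerSum_eq_neg_mul_coeff_sub_sum hf hsplits one_pos hdeg,
    Finset.sum_filter, Finset.Nat.sum_antidiagonal_eq_sum_range_succ_mk,
    Finset.sum_range_succ]

theorem rootPowerSum_two (hf : f.Monic) (hsplits : f.Splits) (hdeg : 2 ≤ f.natDegree) :
    rootPowerSum f 2 = f.coeff (f.natDegree - 1) ^ 2 - 2 * f.coeff (f.natDegree - 2) := by
  have newton : rootPowerSum f 2 = -(2 * f.coeff (f.natDegree - 2)) -
      f.coeff (f.natDegree - 1) * rootPowerSum f 1 := by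
    simp [rootPowerSum_eq_neg_mul_coeff_sub_sum hf hsplits two_pos hdeg,
      Finset.sum_filter, Finset.Nat.sum_antidiagonal_eq_sum_range_succ_mk,
      Finset.sum_range_succ]
  rw [newton, rootPowerSum_one hf hsplits (by lia)]
  ring

theorem rootPowerSum_three (hf : f.Monic) (hsplits : f.Splits) (hdeg : 3 ≤ f.natDegree) :
    rootPowerSum f 3 = -f.coeff (f.natDegree - 1) ^ 3 +
      3 * f.coeff (f.natDegree - 1) * f.coeff (f.natDegree - 2) -
      3 * f.coeff (f.natDegree - 3) := by
  have newton : rootPowerSum f 3 = -(3 * f.coeff (f.natDegree - 3)) -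
      (f.coeff (f.natDegree - 1) * rootPowerSum f 2 +
        f.coeff (f.natDegree - 2) * rootPowerSum f 1) := by
    simp [rootPowerSum_eq_neg_mul_coeff_sub_sum hf hsplits three_pos hdeg,
      Finset.sum_filter, Finset.Nat.sum_antidiagonal_eq_sum_range_succ_mk,
      Finset.sum_range_succ]
  rw [newton, rootPowerSum_two hf hsplits (by lia), rootPowerSum_one hf hsplits (by lia)]
  ring

theorem rootPowerSum_four (hf : f.Monic) (hsplits : f.Splits) (hdeg : 4 ≤ f.natDegree) :
    rootPowerSum f 4 = f.coeff (f.natDegree - 1) ^ 4 -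
      4 * f.coeff (f.natDegree - 1) ^ 2 * f.coeff (f.natDegree - 2) +
      2 * f.coeff (f.natDegree - 2) ^ 2 +
      4 * f.coeff (f.natDegree - 1) * f.coeff (f.natDegree - 3) -
      4 * f.coeff (f.natDegree - 4) := by
  have newton : rootPowerSum f 4 = -(4 * f.coeff (f.natDegree - 4)) -
      (f.coeff (f.natDegree - 1) * rootPowerSum f 3 +
        f.coeff (f.natDegree - 2) * rootPowerSum f 2 +
        f.coeff (f.natDegree - 3) * rootPowerSum f 1) := by
    simp [rootPowerSum_eq_neg_mul_coeff_sub_sum hf hsplits four_pos hdeg,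
      Finset.sum_filter, Finset.Nat.sum_antidiagonal_eq_sum_range_succ_mk,
      Finset.sum_range_succ, add_assoc]
  rw [newton, rootPowerSum_three hf hsplits (by lia), rootPowerSum_two hf hsplits (by lia),
    rootPowerSum_one hf hsplits (by lia)]
  ring

end SmallPowerSums

section Tschirnhaus

variable {R : Type*} [CommRing R] [IsDomain R]

/-- The Tschirnhaus transform of `f` by the subsidiary equation `g(z) + y = 0`, as a product over
the roots of `f` in `R` with multiplicity; it is the classical transform when `f` is monic and
splits. -/
noncomputable def tschirnhausTransform (g f : R[X]) : R[X] :=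
  (f.roots.map fun z ↦ X + C (g.eval z)).prod

theorem natDegree_tschirnhausTransform (g f : R[X]) :
    (tschirnhausTransform g f).natDegree = f.roots.card := by
  rw [tschirnhausTransform, natDegree_multiset_prod_of_monic]
  · simp
  · exact Multiset.forall_mem_map_iff.mpr fun _ _ ↦ monic_X_add_C _

theorem nextCoeff_tschirnhausTransform (g f : R[X]) :
    (tschirnhausTransform g f).nextCoeff = (f.roots.map fun z ↦ g.eval z).sum := by
  simp only [tschirnhausTransform, nextCoeff_X_add_C,
    Monic.nextCoeff_multiset_prod _ _ fun _ _ ↦ monic_X_add_C _]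

theorem coeff_natDegree_sub_one_tschirnhausTransform (g : R[X]) {f : R[X]} (hsplits : f.Splits)
    (hdeg : 0 < f.natDegree) :
    (tschirnhausTransform g f).coeff (f.natDegree - 1) = (f.roots.map fun z ↦ g.eval z).sum := by
  have hnatDegree : (tschirnhausTransform g f).natDegree = f.natDegree := by
    rw [natDegree_tschirnhausTransform, hsplits.natDegree_eq_card_roots]
  rw [← nextCoeff_tschirnhausTransform, nextCoeff_of_natDegree_pos (hnatDegree ▸ hdeg), hnatDegree]

theorem sum_roots_map_eval_quartic (f : R[X]) (a b c d : R) :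
    (f.roots.map fun z ↦ (X ^ 4 + C d * X ^ 3 + C c * X ^ 2 + C b * X + C a).eval z).sum =
      rootPowerSum f 4 + d * rootPowerSum f 3 + c * rootPowerSum f 2 + b * rootPowerSum f 1 +
        f.roots.card * a := by
  have linear_term : (f.roots.map (b * ·)).sum = b * (f.roots.map (· ^ 1)).sum := by
    simp only [pow_one, Multiset.sum_map_mul_left (f := fun z ↦ z)]
  simp only [eval_add, eval_mul, eval_pow, eval_X, eval_C, Multiset.sum_map_add,
    Multiset.sum_map_mul_left, linear_term, Multiset.map_const', Multiset.sum_replicate,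
    nsmul_eq_mul, rootPowerSum]

theorem bring_quintic_coeff_four_general {f : R[X]} (hf : f.Monic) (hsplits : f.Splits)
    (hdeg : 4 ≤ f.natDegree) (h₁ : f.coeff (f.natDegree - 1) = 0)
    (h₂ : f.coeff (f.natDegree - 2) = 0) (a b c d : R) :
    (tschirnhausTransform (X ^ 4 + C d * X ^ 3 + C c * X ^ 2 + C b * X + C a) f).coeff
        (f.natDegree - 1) =
      f.natDegree * a - 3 * f.coeff (f.natDegree - 3) * d - 4 * f.coeff (f.natDegree - 4) := by
  rw [coeff_natDegree_sub_one_tschirnhausTransform _ hsplits (by lia),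
    sum_roots_map_eval_quartic, ← hsplits.natDegree_eq_card_roots,
    rootPowerSum_four hf hsplits hdeg, rootPowerSum_three hf hsplits (by lia),
    rootPowerSum_two hf hsplits (by lia), rootPowerSum_one hf hsplits (by lia), h₁, h₂]
  ring

end Tschirnhaus

section Quintic

variable {p q r z₁ z₂ z₃ z₄ z₅ : ℂ}

theorem bringQuinticTransform_eq_tschirnhausTransform {f : ℂ[X]}
    (hroots : f.roots = {z₁, z₂, z₃, z₄, z₅}) (a b c d : ℂ) :
    bringQuinticTransform a b c d z₁ z₂ z₃ z₄ z₅ =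
      tschirnhausTransform (X ^ 4 + C d * X ^ 3 + C c * X ^ 2 + C b * X + C a) f := by
  simp [bringQuinticTransform, tschirnhausTransform, hroots, mul_assoc]

theorem coeff_four_bringQuinticTransform
    (hroots : (X ^ 5 + C p * X ^ 2 + C q * X + C r).roots = {z₁, z₂, z₃, z₄, z₅})
    (a b c d : ℂ) :
    (bringQuinticTransform a b c d z₁ z₂ z₃ z₄ z₅).coeff 4 = 5 * a - 3 * p * d - 4 * q := by
  have hmonic : (X ^ 5 + C p * X ^ 2 + C q * X + C r).Monic := by monicity!
  have hdeg : (X ^ 5 + C p * X ^ 2 + C q * X + C r).natDegree = 5 := by compute_degree!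
  have h := bring_quintic_coeff_four_general hmonic (IsAlgClosed.splits _)
  rw [hdeg] at h
  rw [bringQuinticTransform_eq_tschirnhausTransform hroots]
  simpa [coeff_X, coeff_C] using h (by norm_num) (by simp) (by simp) a b c d

end Quintic

/-- Bring §X: for the quintic `X⁵ + pX² + qX + r`, the coefficient of `Y⁴`
in the quartic Tschirnhaus transform equals `5a - 3pd - 4q`; in particular
`a = (3pd + 4q)/5` removes the second term. -/
theorem bring_quintic_coeff_four (p q r a b c d z₁ z₂ z₃ z₄ z₅ : ℂ)
    (hroots : (X ^ 5 + C p * X ^ 2 + C q * X + C r).roots =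
      {z₁, z₂, z₃, z₄, z₅}) :
    (bringQuinticTransform a b c d z₁ z₂ z₃ z₄ z₅).coeff 4 =
      5 * a - 3 * p * d - 4 * q ∧
    (bringQuinticTransform ((3 * p * d + 4 * q) / 5) b c d
      z₁ z₂ z₃ z₄ z₅).coeff 4 = 0 := by
  have hcoeff := coeff_four_bringQuinticTransform hroots
  exact ⟨hcoeff a b c d, (hcoeff _ b c d).trans (by ring)⟩
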